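/- arXiv:hep-th/0306220 — 6 statements merged into one kernel-verified Lean document; each statement's English description precedes it below -/
import Mathlib

section
/- Let X be a type, M an additive commutative group, and p ≥ 1. Suppose f : X^p → M is antisymmetric, i.e. interchanging any two of its arguments changes its sign. Define Af : X^{p+1} → M by Af(x_1,...,x_{p+1}) = f(x_1,...,x_p) − Σ_{i=1}^{p} f(x_1,...,x_{i−1},x_{p+1},x_{i+1},...,x_p). Then the operator A is nilpotent on f: for all x_1,...,x_{p+2} ∈ X, (A(Af))(x_1,...,x_{p+2}) = Af(x_1,...,x_{p+1}) − Σ_{i=1}^{p+1} Af(x_1,...,x_{i−1},x_{p+2},x_{i+1},...,x_{p+1}) = 0. -/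
/-!
Write `x = (y, a, b)` with `y : Fin p → X`. Expanding `A(Af)(y, a, b)`, the terms `f y` and
`f (y[i := b])` cancel in pairs, which leaves
`-∑ i, f (y[i := a]) + ∑ i, ∑ j, f (y[i := b][j := a])`.
The diagonal of the double sum cancels the first sum. The off-diagonal terms at `(i, j)` and
`(j, i)` differ by the interchange of the arguments `i` and `j`, so they cancel each other;
no division by two is needed.
-/

/-- The antisymmetrisation operator: given `f` of `p` arguments, produce a function of
`p+1` arguments by
`Af(x_1,...,x_{p+1}) = f(x_1,...,x_p) − Σ_{i=1}^{p} f(x_1,...,x_{i−1},x_{p+1},x_{i+1},...,x_p)`. -/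
def AOp {X M : Type*} [AddCommGroup M] {p : ℕ}
    (f : (Fin p → X) → M) : (Fin (p + 1) → X) → M :=
  fun x =>
    f (x ∘ Fin.castSucc) -
      ∑ i : Fin p, f (Function.update (x ∘ Fin.castSucc) i (x (Fin.last p)))

/-- A double sum whose off-diagonal part is antisymmetric reduces to its diagonal. -/
lemma sum_sum_eq_sum_diag {ι M : Type*} [Fintype ι] [DecidableEq ι] [AddCommGroup M]
    (g : ι → ι → M) (hg : ∀ i j, i ≠ j → g i j + g j i = 0) :
    ∑ i, ∑ j, g i j = ∑ i, g i i := by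
  have hoff : ∑ q : ι × ι, (if q.1 = q.2 then 0 else g q.1 q.2) = 0 := by
    refine Finset.sum_involution (fun q _ => q.swap) ?_ ?_ (by simp) (by simp)
    · rintro ⟨i, j⟩ -
      by_cases h : i = j
      · simp [h]
      · simpa [h, Ne.symm h] using hg i j h
    · rintro ⟨i, j⟩ - hne heq
      simp only [Prod.swap_prod_mk, Prod.mk.injEq] at heq
      exact hne (if_pos heq.2)
  rw [Fintype.sum_prod_type] at hoff
  have hsplit : ∀ i j, g i j = (if i = j then g i j else 0) + (if i = j then 0 else g i j) := by
    intro i j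
    split_ifs <;> simp
  calc ∑ i, ∑ j, g i j
      = ∑ i, ∑ j, ((if i = j then g i j else 0) + (if i = j then 0 else g i j)) :=
        Finset.sum_congr rfl fun i _ => Finset.sum_congr rfl fun j _ => hsplit i j
    _ = ∑ i, g i i := by
        simp only [Finset.sum_add_distrib, hoff, add_zero, Finset.sum_ite_eq, Finset.mem_univ,
          if_true]

lemma update_update_comp_swap {ι X : Type*} [DecidableEq ι] (y : ι → X) (a b : X) {i j : ι}
    (h : i ≠ j) :
    Function.update (Function.update y i b) j a ∘ Equiv.swap i j =
      Function.update (Function.update y j b) i a := by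
  funext k
  by_cases hi : k = i
  · subst hi
    simp
  · by_cases hj : k = j
    · subst hj
      simp [h, hi]
    · simp [Equiv.swap_apply_of_ne_of_ne hi hj, hi, hj]

/-- `A` in terms of the splitting `x = (y, a)`. -/
lemma AOp_snoc {X M : Type*} [AddCommGroup M] {p : ℕ} (f : (Fin p → X) → M)
    (y : Fin p → X) (a : X) :
    AOp f (Fin.snoc y a : Fin (p + 1) → X) = f y - ∑ i, f (Function.update y i a) := by
  have h : (Fin.snoc y a : Fin (p + 1) → X) ∘ Fin.castSucc = y := by
    funext k
    simp
  simp only [AOp, h, Fin.snoc_last]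

/-- If `f` is antisymmetric then `A(Af) = 0`. -/
theorem stmt0 {X M : Type*} [AddCommGroup M] {p : ℕ} (hp : 1 ≤ p)
    (f : (Fin p → X) → M)
    (hf : ∀ (x : Fin p → X) (i j : Fin p), i ≠ j → f (x ∘ Equiv.swap i j) = - f x) :
    ∀ x : Fin (p + 2) → X, AOp (AOp f) x = 0 := by
  intro x
  obtain ⟨y, a, b, rfl⟩ : ∃ (y : Fin p → X) (a b : X),
      x = (Fin.snoc (Fin.snoc y a : Fin (p + 1) → X) b : Fin (p + 2) → X) :=
    ⟨Fin.init (Fin.init x : Fin (p + 1) → X), (Fin.init x : Fin (p + 1) → X) (Fin.last p),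
      x (Fin.last (p + 1)), by simp only [Fin.snoc_init_self]⟩
  have hdiag : ∑ i, ∑ j, f (Function.update (Function.update y i b) j a) =
      ∑ i, f (Function.update y i a) := by
    rw [sum_sum_eq_sum_diag (fun i j => f (Function.update (Function.update y i b) j a))]
    · simp only [Function.update_idem]
    · intro i j hij
      rw [← update_update_comp_swap y a b hij, hf _ i j hij, add_neg_cancel]
  simp only [AOp_snoc, Fin.sum_univ_castSucc, ← Fin.snoc_update, Fin.update_snoc_last,
    Finset.sum_sub_distrib, hdiag]
  abel
end

section
/- Let X be a type, M an additive commutative group, and p ≥ 1. If f : X^p → M is antisymmetric (interchanging any two of its arguments changes its sign), then Af : X^{p+1} → M, defined by Af(x_1,...,x_{p+1}) = f(x_1,...,x_p) − Σ_{i=1}^{p} f(x_1,...,x_{i−1},x_{p+1},x_{i+1},...,x_p), is also antisymmetric in its p+1 arguments. -/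
theorem AOp_swap_castSucc {X M : Type*} [AddCommGroup M] {p : ℕ} (f : (Fin p → X) → M)
    (hf : ∀ (x : Fin p → X) (i j : Fin p), i ≠ j → f (x ∘ Equiv.swap i j) = - f x)
    (x : Fin (p + 1) → X) {a b : Fin p} (hab : a ≠ b) :
    AOp f (x ∘ Equiv.swap a.castSucc b.castSucc) = - AOp f x := by
  have hy : (x ∘ Equiv.swap a.castSucc b.castSucc) ∘ Fin.castSucc
      = (x ∘ Fin.castSucc) ∘ Equiv.swap a b := by
    funext k
    simp only [Function.comp_apply, (Fin.castSucc_injective p).map_swap]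
  have hz : (x ∘ Equiv.swap a.castSucc b.castSucc) (Fin.last p) = x (Fin.last p) := by
    rw [Function.comp_apply, Equiv.swap_apply_of_ne_of_ne (Fin.castSucc_ne_last a).symm
      (Fin.castSucc_ne_last b).symm]
  have hterm : ∀ k, f (Function.update ((x ∘ Fin.castSucc) ∘ Equiv.swap a b) k (x (Fin.last p)))
      = - f (Function.update (x ∘ Fin.castSucc) (Equiv.swap a b k) (x (Fin.last p))) := by
    intro k
    rw [← hf _ a b hab, Function.update_comp_equiv]
    simp
  simp only [AOp]
  rw [hy, hz, hf _ a b hab, Finset.sum_congr rfl fun k _ => hterm k, Finset.sum_neg_distrib,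
    Equiv.sum_comp (Equiv.swap a b)
      (fun k => f (Function.update (x ∘ Fin.castSucc) k (x (Fin.last p))))]
  abel

theorem AOp_swap_last {X M : Type*} [AddCommGroup M] {p : ℕ} (f : (Fin p → X) → M)
    (hf : ∀ (x : Fin p → X) (i j : Fin p), i ≠ j → f (x ∘ Equiv.swap i j) = - f x)
    (x : Fin (p + 1) → X) (a : Fin p) :
    AOp f (x ∘ Equiv.swap a.castSucc (Fin.last p)) = - AOp f x := by
  set y : Fin p → X := x ∘ Fin.castSucc with hydef
  set z : X := x (Fin.last p) with hzdef
  have hy : (x ∘ Equiv.swap a.castSucc (Fin.last p)) ∘ Fin.castSucc = Function.update y a z := by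
    funext k
    rcases eq_or_ne k a with rfl | hk
    · simp [hzdef]
    · rw [Function.update_of_ne hk, Function.comp_apply, Function.comp_apply,
        Equiv.swap_apply_of_ne_of_ne ((Fin.castSucc_injective p).ne hk) (Fin.castSucc_ne_last k)]
      rfl
  have hz : (x ∘ Equiv.swap a.castSucc (Fin.last p)) (Fin.last p) = y a := by
    simp [hydef]
  have hterm : ∀ k ∈ Finset.univ.erase a,
      f (Function.update (Function.update y a z) k (y a)) = - f (Function.update y k z) := by
    intro k hk
    have hka : k ≠ a := Finset.ne_of_mem_erase hk
    rw [← hf _ a k hka.symm]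
    congr 1
    funext l
    rcases eq_or_ne l k with rfl | hlk
    · simp [hka.symm]
    · rcases eq_or_ne l a with rfl | hla
      · simp [hlk]
      · simp [hlk, hla, Equiv.swap_apply_of_ne_of_ne hla hlk]
  simp only [AOp]
  rw [hy, hz, ← hydef, ← hzdef, ← Finset.add_sum_erase _ _ (Finset.mem_univ a),
    Finset.sum_congr rfl hterm, Finset.sum_neg_distrib,
    ← Finset.add_sum_erase _ (fun k => f (Function.update y k z)) (Finset.mem_univ a),
    Function.update_idem, Function.update_eq_self]
  abel

/-- If `f` is antisymmetric in its `p` arguments, then `Af` is antisymmetric in its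
`p+1` arguments. -/
theorem stmt1 {X M : Type*} [AddCommGroup M] {p : ℕ} (hp : 1 ≤ p)
    (f : (Fin p → X) → M)
    (hf : ∀ (x : Fin p → X) (i j : Fin p), i ≠ j → f (x ∘ Equiv.swap i j) = - f x) :
    ∀ (x : Fin (p + 1) → X) (i j : Fin (p + 1)), i ≠ j →
      AOp f (x ∘ Equiv.swap i j) = - AOp f x := by
  intro x i j hij
  induction i using Fin.lastCases with
  | last =>
    induction j using Fin.lastCases with
    | last => exact absurd rfl hij
    | cast b => rw [Equiv.swap_comm]; exact AOp_swap_last f hf x b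
  | cast a =>
    induction j using Fin.lastCases with
    | last => exact AOp_swap_last f hf x a
    | cast b => exact AOp_swap_castSucc f hf x fun h => hij (congrArg Fin.castSucc h)
end

section
/- Let V and W be real vector spaces, p ≥ 1, and f : V^p → W an alternating multilinear map (multilinear, and vanishing whenever two arguments are equal). Let θ^1,...,θ^{p+1} ∈ V, and let X_{rs} ∈ V be given for all pairs r ≠ s in {1,...,p+1} with X_{rs} = X_{sr}. For r ≠ s, let L_{rs} ∈ V^p denote the ordered list obtained from (θ^1,...,θ^{p+1}) by deleting the entry θ^s and replacing the entry θ^r by X_{rs}. Then Σ_{s=1}^{p+1} (−1)^{s−1} Σ_{r=1, r≠s}^{p+1} f(L_{rs}) = 0. -/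
/-!
The terms indexed by `(s, r)` and `(r, s)` cancel. Let `v` be `θ` with both entries `r` and `s`
replaced by `X r s = X s r`. Deleting entry `s` of `v` gives `L_{rs}`, deleting entry `r` gives
`L_{sr}`, and since `v r = v s` the two deletions contribute opposite signed values of `f`
(`AlternatingMap.neg_one_pow_smul_map_removeNth_add_eq_zero_of_eq`).
-/

/-- The key cancellation in the proof of the composition rule for generalised
Chern–Simons forms: for an alternating multilinear map `f` in `p` variables,
vectors `θ^1,...,θ^{p+1}` and a symmetric array `X_{rs} = X_{sr}`,
`Σ_{s=1}^{p+1} (−1)^{s−1} Σ_{r ≠ s} f(L_{rs}) = 0`, where `L_{rs}` is obtained from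
`(θ^1,...,θ^{p+1})` by deleting the entry `θ^s` and replacing the entry `θ^r` by
`X_{rs}`.  (Indices `0`-based, so the sign is `(−1)^s`.) -/
theorem stmt8 {V W : Type*} [AddCommGroup V] [Module ℝ V] [AddCommGroup W] [Module ℝ W]
    {p : ℕ} (hp : 1 ≤ p) (f : AlternatingMap ℝ V W (Fin p))
    (θ : Fin (p + 1) → V) (X : Fin (p + 1) → Fin (p + 1) → V)
    (hX : ∀ r s : Fin (p + 1), r ≠ s → X r s = X s r) :
    ∑ s : Fin (p + 1), (-1 : ℤ) ^ (s : ℕ) •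
      ∑ r ∈ Finset.univ.erase s,
        f (fun i : Fin p =>
          if Fin.succAbove s i = r then X r s else θ (Fin.succAbove s i)) = 0 := by
  simp_rw [Finset.smul_sum]
  rw [Finset.sum_sigma']
  refine Finset.sum_involution (fun a _ => ⟨a.2, a.1⟩) ?_ ?_ ?_ ?_
  · rintro ⟨s, r⟩ h
    have hrs : r ≠ s := by simpa using h
    -- `v` is `θ` with both entries `r` and `s` replaced by the common value `X r s`
    let v : Fin (p + 1) → V := fun k => if k = r ∨ k = s then X r s else θ k
    have key := f.neg_one_pow_smul_map_removeNth_add_eq_zero_of_eq (v := v) (i := s) (j := r)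
      (by simp [v]) hrs.symm
    have hs : s.removeNth v =
        fun i => if s.succAbove i = r then X r s else θ (s.succAbove i) := by
      ext i
      simp [v, Fin.removeNth_apply, Fin.succAbove_ne]
    have hr : r.removeNth v =
        fun i => if r.succAbove i = s then X s r else θ (r.succAbove i) := by
      ext i
      simp [v, Fin.removeNth_apply, Fin.succAbove_ne, hX r s hrs]
    rw [hs, hr] at key
    exact key
  · rintro ⟨s, r⟩ h _ heq
    have hrs : r ≠ s := by simpa using h
    exact hrs (congrArg Sigma.fst heq)
  · rintro ⟨s, r⟩ h
    have hrs : r ≠ s := by simpa using h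
    simpa using hrs.symm
  · rintro ⟨s, r⟩ _
    rfl
end

section
/- Let V and W be real vector spaces, p ≥ 1, and f : V^p → W an alternating multilinear map. Let θ^1,...,θ^p ∈ V and t_1,...,t_p ∈ ℝ, and for q ∈ {1,...,p} define θ^q_* = Σ_{r=q}^{p} [∏_{i=1, i≠q}^{r} (1−t_i)] θ^r. Then f(θ^1_*, θ^2_*, ..., θ^p_*) = [∏_{r=1}^{p−1} (1−t_r)^{p−r}] · f(θ^1, θ^2, ..., θ^p). -/
/-!
Expanding `f` multilinearly gives a sum over the maps `σ : Fin p → Fin p` with `q ≤ σ q` for all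
`q`. A non-injective `σ` contributes zero because `f` is alternating, and an injective one is the
identity (`eq_id_of_injective_of_le`). The surviving coefficient is `∏ q, ∏ i < q, (1 - t i)`, in
which the factor `1 - t i` occurs once for each of the `p - 1 - i` indices `q > i`.
-/

/-- Such a `σ` is a permutation, so `∑ σ q = ∑ q`, which forces equality in every `q ≤ σ q`. -/
theorem eq_id_of_injective_of_le {p : ℕ} {σ : Fin p → Fin p} (hσ : Function.Injective σ)
    (hle : ∀ q, q ≤ σ q) : σ = id := by
  have hsum : ∑ q : Fin p, (q : ℕ) = ∑ q : Fin p, (σ q : ℕ) :=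
    ((Finite.injective_iff_bijective.mp hσ).sum_comp (fun q : Fin p => (q : ℕ))).symm
  have h := (Finset.sum_eq_sum_iff_of_le (fun q _ => Fin.le_def.mp (hle q))).mp hsum
  funext q
  exact (Fin.ext (h q (Finset.mem_univ q))).symm

/-- For an alternating multilinear map `f` in `p ≥ 1` variables and the vectors
`θ^q_* = Σ_{r ≥ q} [∏_{i ≤ r, i ≠ q} (1−t_i)] θ^r` (indices `0`-based),
`f(θ^1_*,...,θ^p_*) = [∏_{r=1}^{p−1} (1−t_r)^{p−r}] f(θ^1,...,θ^p)`. -/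
theorem stmt9 {V W : Type*} [AddCommGroup V] [Module ℝ V] [AddCommGroup W] [Module ℝ W]
    {p : ℕ} (hp : 1 ≤ p) (f : AlternatingMap ℝ V W (Fin p))
    (θ : Fin p → V) (t : Fin p → ℝ) :
    f (fun q : Fin p =>
        ∑ r ∈ Finset.Ici q, (∏ i ∈ (Finset.Iic r).erase q, (1 - t i)) • θ r) =
      (∏ r : Fin p, (1 - t r) ^ (p - 1 - (r : ℕ))) • f θ := by
  have hexp := f.toMultilinearMap.map_sum_finset
    (fun q r : Fin p => (∏ i ∈ (Finset.Iic r).erase q, (1 - t i)) • θ r)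
    (fun q => Finset.Ici q)
  simp only [AlternatingMap.coe_multilinearMap] at hexp
  rw [hexp, Finset.sum_eq_single id]
  · have hsmul := f.toMultilinearMap.map_smul_univ
      (fun q : Fin p => ∏ i ∈ (Finset.Iic q).erase q, (1 - t i)) θ
    simp only [AlternatingMap.coe_multilinearMap] at hsmul
    simp only [id]
    rw [hsmul]
    congr 1
    simp only [Finset.Iic_erase]
    -- Exchange the products: for fixed `i`, the index `q` runs over `Ioi i`.
    rw [Finset.prod_comm' (t' := Finset.univ) (s' := fun i => Finset.Ioi i) (by simp)]
    simp
  · intro σ hσ hne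
    have hle : ∀ q, q ≤ σ q := by simpa using hσ
    have hninj : ¬ Function.Injective σ := fun hinj => hne (eq_id_of_injective_of_le hinj hle)
    have hsmul := f.toMultilinearMap.map_smul_univ
      (fun q : Fin p => ∏ i ∈ (Finset.Iic (σ q)).erase q, (1 - t i)) (fun q => θ (σ q))
    simp only [AlternatingMap.coe_multilinearMap] at hsmul
    rw [hsmul, f.map_eq_zero_of_not_injective, smul_zero]
    exact fun h => hninj (Function.Injective.of_comp (f := θ) h)
  · intro h
    simp at h
end

section
/- Let ι be a finite type, M a real vector space, and l ≥ 1. Let a : ι^{l+1} → ℝ be totally antisymmetric (interchanging any two arguments changes its sign) and let G : ι^{l} → M be arbitrary. Then Σ_{(x_1,...,x_{l+1}) ∈ ι^{l+1}} a(x_1,...,x_{l+1}) · G(x_1,...,x_l) = (1/(l+1)) Σ_{(x_1,...,x_{l+1}) ∈ ι^{l+1}} a(x_1,...,x_{l+1}) · Σ_{r=1}^{l+1} (−1)^{l+1−r} G(x_1,...,x_{r−1},x_{r+1},...,x_{l+1}). -/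
/-!
Let `σ_r` be the cycle of `{r, …, l}` that sends `k` to `k + 1` for `r ≤ k < l`, and `l` to `r`.
Then `σ_r ∘ castSucc = succAbove r`, and `σ_r` has sign `(-1) ^ (l - r)`. By total antisymmetry,
the substitution `x ↦ x ∘ σ_r` shows that each of the `l + 1` summands indexed by `r` on the right
equals the sum on the left.
-/

theorem antisymm_comp_perm {ι : Type*} {n : ℕ} (a : (Fin n → ι) → ℝ)
    (ha : ∀ (x : Fin n → ι) (i j : Fin n), i ≠ j → a (x ∘ Equiv.swap i j) = - a x)
    (σ : Equiv.Perm (Fin n)) (x : Fin n → ι) :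
    a (x ∘ σ) = ((Equiv.Perm.sign σ : ℤ) : ℝ) * a x := by
  induction σ using Equiv.Perm.swap_induction_on generalizing x with
  | one => simp
  | swap_mul f i j hij ih =>
    rw [Equiv.Perm.coe_mul, ← Function.comp_assoc, ih, ha _ _ _ hij, Equiv.Perm.sign_mul,
      Equiv.Perm.sign_swap hij]
    simp

/-- Each deleted position `r` contributes the same amount as the deletion of the last one. -/
theorem sum_succAbove_eq {ι : Type*} [Fintype ι] {M : Type*} [AddCommGroup M] [Module ℝ M]
    {l : ℕ} (a : (Fin (l + 1) → ι) → ℝ)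
    (ha : ∀ (x : Fin (l + 1) → ι) (i j : Fin (l + 1)), i ≠ j →
      a (x ∘ Equiv.swap i j) = - a x)
    (G : (Fin l → ι) → M) (r : Fin (l + 1)) :
    ∑ x : Fin (l + 1) → ι, a x • ((-1 : ℝ) ^ (l - (r : ℕ))) • G (x ∘ Fin.succAbove r) =
      ∑ x : Fin (l + 1) → ι, a x • G (x ∘ Fin.castSucc) := by
  have hcomp := Fin.cycleIcc_comp_succAbove r (Fin.last l) (Fin.le_last r)
  have hsign := Fin.sign_cycleIcc_of_le (Fin.le_last r)
  generalize Fin.cycleIcc r (Fin.last l) = σ at hcomp hsign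
  rw [Fin.succAbove_last] at hcomp
  rw [← Equiv.sum_comp (Equiv.arrowCongr σ.symm (Equiv.refl ι))
    (fun x => a x • G (x ∘ Fin.castSucc))]
  refine Finset.sum_congr rfl fun x _ => ?_
  have hx : Equiv.arrowCongr σ.symm (Equiv.refl ι) x = x ∘ σ := rfl
  rw [hx, antisymm_comp_perm a ha, hsign, Function.comp_assoc, hcomp, smul_smul, mul_comm]
  simp

/-- Symmetrisation identity: for a totally antisymmetric `a : ι^{l+1} → ℝ` and an
arbitrary `G : ι^l → M`,
`Σ_x a(x) G(x_1,...,x_l)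
   = (1/(l+1)) Σ_x a(x) Σ_{r=1}^{l+1} (−1)^{l+1−r} G(x_1,..,x_{r−1},x_{r+1},..,x_{l+1})`.
(Indices `0`-based: deleting position `r` is `x ∘ Fin.succAbove r`, with sign
`(−1)^{l−r}`.) -/
theorem stmt12 {ι : Type*} [Fintype ι] {M : Type*} [AddCommGroup M] [Module ℝ M]
    {l : ℕ} (hl : 1 ≤ l)
    (a : (Fin (l + 1) → ι) → ℝ)
    (ha : ∀ (x : Fin (l + 1) → ι) (i j : Fin (l + 1)), i ≠ j →
      a (x ∘ Equiv.swap i j) = - a x)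
    (G : (Fin l → ι) → M) :
    ∑ x : Fin (l + 1) → ι, a x • G (x ∘ Fin.castSucc) =
      (1 / ((l : ℝ) + 1)) • ∑ x : Fin (l + 1) → ι, a x •
        ∑ r : Fin (l + 1), ((-1 : ℝ) ^ (l - (r : ℕ))) • G (x ∘ Fin.succAbove r) := by
  rw [Finset.sum_congr rfl fun x _ => Finset.smul_sum, Finset.sum_comm,
    Finset.sum_congr rfl fun r _ => sum_succAbove_eq a ha G r, Finset.sum_const,
    Finset.card_univ, Fintype.card_fin, ← Nat.cast_smul_eq_nsmul ℝ, smul_smul]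
  have h : (l : ℝ) + 1 ≠ 0 := by positivity
  rw [Nat.cast_succ, one_div, inv_mul_cancel₀ h, one_smul]
end

section
/- Let V be a real vector space, d ≥ 1 an integer, and 0 ≤ r < d. Let E^1,...,E^d and D^1,...,D^d be elements of V, and work in the exterior algebra Λ(V). For indices a_1,...,a_r ∈ {1,...,d} define e_{a_1...a_r}(E) = (1/(d−r)!) Σ_{a_{r+1},...,a_d = 1}^{d} ε_{a_1...a_d} E^{a_{r+1}} ∧ ⋯ ∧ E^{a_d}, where ε_{a_1...a_d} is the totally antisymmetric Levi-Civita symbol with ε_{1...d} = +1. Then the first-order variation of e in the direction D satisfies (1/(d−r)!) Σ_{a_{r+1},...,a_d} ε_{a_1...a_d} Σ_{j=r+1}^{d} E^{a_{r+1}} ∧ ⋯ ∧ D^{a_j} ∧ ⋯ ∧ E^{a_d} = Σ_{b=1}^{d} D^b ∧ e_{a_1...a_r b}(E), for all a_1,...,a_r. -/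
/-!
Each of the `k + 1` positions `j` at which `D` can be inserted contributes the same amount.
Renaming the summation indices by the transposition `(0 j)` moves `D` to the front; the sign
picked up by the alternating wedge product cancels the sign picked up by the Levi-Civita symbol
(`sum_insert_eq`). The factor `k + 1` turns `1 / (k + 1)!` into `1 / k!`, and splitting off the
first summation index as `c` gives the right-hand side.
-/

/-- The Levi-Civita symbol on `{1,...,n}`: the sign of `c` if `c` is a permutation,
and `0` otherwise (i.e. `0` whenever two indices coincide). -/
noncomputable def leviCivita {n : ℕ} (c : Fin n → Fin n) : ℤ :=
  if h : Function.Bijective c then Equiv.Perm.sign (Equiv.ofBijective c h) else 0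

/-- The wedge product `x_1 ∧ x_2 ∧ ⋯ ∧ x_m` in the exterior algebra. -/
noncomputable def wedgeOfFn {V : Type*} [AddCommGroup V] [Module ℝ V] {m : ℕ}
    (x : Fin m → V) : ExteriorAlgebra ℝ V :=
  (List.ofFn fun l : Fin m => ExteriorAlgebra.ι ℝ (x l)).prod

theorem leviCivita_comp_perm {n : ℕ} (c : Fin n → Fin n) (σ : Equiv.Perm (Fin n)) :
    leviCivita (c ∘ σ) = Equiv.Perm.sign σ * leviCivita c := by
  unfold leviCivita
  by_cases h : Function.Bijective c
  · have h' : Function.Bijective (c ∘ σ) := h.comp σ.bijective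
    rw [dif_pos h, dif_pos h']
    have : Equiv.ofBijective (c ∘ σ) h' = Equiv.ofBijective c h * σ := by
      ext x; simp
    rw [this, Equiv.Perm.sign_mul, Units.val_mul, mul_comm]
  · have h' : ¬ Function.Bijective (c ∘ σ) := fun h' => h (by
      have := h'.comp σ.symm.bijective
      rwa [Function.comp_assoc, Equiv.self_comp_symm, Function.comp_id] at this)
    rw [dif_neg h, dif_neg h', mul_zero]

theorem append_comp_swap {r m : ℕ} {α : Type*} (a : Fin r → α) (b : Fin m → α) (i j : Fin m) :
    Fin.append a (b ∘ Equiv.swap i j) =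
      Fin.append a b ∘ Equiv.swap (Fin.natAdd r i) (Fin.natAdd r j) := by
  funext x
  refine Fin.addCases (fun l => ?_) (fun l => ?_) x
  · have hne (q : Fin m) : Fin.castAdd m l ≠ Fin.natAdd r q := fun h => by
      have := congrArg Fin.val h
      simp at this
      omega
    rw [Fin.append_left, Function.comp_apply, Equiv.swap_apply_of_ne_of_ne (hne i) (hne j),
      Fin.append_left]
  · have hinj : Function.Injective (Fin.natAdd r : Fin m → Fin (r + m)) :=
      Fin.natAdd_injective m r
    rw [Fin.append_right, Function.comp_apply, Function.comp_apply, ← hinj.map_swap,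
      Fin.append_right]

theorem wedgeOfFn_eq_ιMulti {V : Type*} [AddCommGroup V] [Module ℝ V] {m : ℕ} (x : Fin m → V) :
    wedgeOfFn x = ExteriorAlgebra.ιMulti ℝ m x := by
  rw [ExteriorAlgebra.ιMulti_apply, wedgeOfFn]

theorem wedgeOfFn_cons {V : Type*} [AddCommGroup V] [Module ℝ V] {m : ℕ} (v : V) (x : Fin m → V) :
    wedgeOfFn (Fin.cons v x : Fin (m + 1) → V) = ExteriorAlgebra.ι ℝ v * wedgeOfFn x := by
  simp [wedgeOfFn, List.ofFn_succ]

/-- The total contribution of inserting `D` at position `j` does not depend on `j`. -/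
theorem sum_insert_eq {V : Type*} [AddCommGroup V] [Module ℝ V]
    (r k : ℕ) (E D : Fin (r + (k + 1)) → V) (a : Fin r → Fin (r + (k + 1))) (j : Fin (k + 1)) :
    (∑ b : Fin (k + 1) → Fin (r + (k + 1)), ((leviCivita (Fin.append a b) : ℤ) : ℝ) •
        wedgeOfFn (fun l : Fin (k + 1) => if l = j then D (b l) else E (b l))) =
      ∑ b : Fin (k + 1) → Fin (r + (k + 1)), ((leviCivita (Fin.append a b) : ℤ) : ℝ) •
        wedgeOfFn (fun l : Fin (k + 1) => if l = 0 then D (b l) else E (b l)) := by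
  rcases eq_or_ne j 0 with rfl | hj
  · rfl
  refine Fintype.sum_equiv (Equiv.arrowCongr (Equiv.swap 0 j) (Equiv.refl _)) _ _ fun b => ?_
  have hb : Equiv.arrowCongr (Equiv.swap 0 j) (Equiv.refl _) b = b ∘ Equiv.swap 0 j := by
    funext x; simp [Equiv.arrowCongr]
  have hx : (fun l : Fin (k + 1) => if l = 0 then D ((b ∘ Equiv.swap 0 j) l)
        else E ((b ∘ Equiv.swap 0 j) l)) =
      (fun l : Fin (k + 1) => if l = j then D (b l) else E (b l)) ∘ Equiv.swap 0 j := by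
    funext l
    have : Equiv.swap 0 j l = j ↔ l = 0 := by
      rw [Equiv.swap_apply_eq_iff, Equiv.swap_apply_right]
    simp only [Function.comp_apply, this]
  have hne : Fin.natAdd r (0 : Fin (k + 1)) ≠ Fin.natAdd r j := fun h =>
    hj (Fin.natAdd_injective _ _ h).symm
  rw [hb, hx, append_comp_swap, leviCivita_comp_perm, wedgeOfFn_eq_ιMulti, wedgeOfFn_eq_ιMulti,
    AlternatingMap.map_swap _ _ hj.symm, Equiv.Perm.sign_swap hne]
  simp

theorem append_cons_eq {r k : ℕ} {α : Type*} (a : Fin r → α) (c : α) (b : Fin k → α)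
    (h : r + (k + 1) = (r + 1) + k) :
    Fin.append a (Fin.cons c b : Fin (k + 1) → α) =
      Fin.append (Fin.snoc a c : Fin (r + 1) → α) b ∘ Fin.cast h := by
  rw [Fin.append_left_snoc]
  rfl

/-- The variation formula `δe_{a_1...a_r} = δE^{a_{r+1}} ∧ e_{a_1...a_r a_{r+1}}` for the
natural volume elements `e_{a_1...a_r}(E) = (1/(d−r)!) ε_{a_1...a_d} E^{a_{r+1}} ∧ ⋯ ∧ E^{a_d}`:
with `d = r + (k+1)` (so `0 ≤ r < d`), frames `E, D : Fin d → V` and fixed indices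
`a : Fin r → Fin d`,
`(1/(d−r)!) Σ_{a_{r+1},...,a_d} ε_{a_1...a_d} Σ_j E^{a_{r+1}} ∧ ⋯ ∧ D^{a_j} ∧ ⋯ ∧ E^{a_d}
  = Σ_b D^b ∧ e_{a_1...a_r b}(E)`. -/
theorem stmt16 {V : Type*} [AddCommGroup V] [Module ℝ V]
    (r k : ℕ) (E D : Fin (r + (k + 1)) → V) (a : Fin r → Fin (r + (k + 1))) :
    (((k + 1).factorial : ℝ))⁻¹ •
      ∑ b : Fin (k + 1) → Fin (r + (k + 1)),
        ((leviCivita (Fin.append a b) : ℤ) : ℝ) •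
          ∑ j : Fin (k + 1),
            wedgeOfFn (fun l : Fin (k + 1) => if l = j then D (b l) else E (b l)) =
    ∑ c : Fin (r + (k + 1)),
      ExteriorAlgebra.ι ℝ (D c) *
        ((k.factorial : ℝ)⁻¹ •
          ∑ b : Fin k → Fin (r + (k + 1)),
            ((leviCivita ((Fin.append (Fin.snoc a c) b) ∘
                Fin.cast (by omega : r + (k + 1) = (r + 1) + k)) : ℤ) : ℝ) •
              wedgeOfFn (fun l : Fin k => E (b l))) := by
  have hL : (∑ b : Fin (k + 1) → Fin (r + (k + 1)), ((leviCivita (Fin.append a b) : ℤ) : ℝ) •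
        ∑ j : Fin (k + 1),
          wedgeOfFn (fun l : Fin (k + 1) => if l = j then D (b l) else E (b l))) =
      ((k + 1 : ℕ) : ℝ) • ∑ b : Fin (k + 1) → Fin (r + (k + 1)),
        ((leviCivita (Fin.append a b) : ℤ) : ℝ) •
          wedgeOfFn (fun l : Fin (k + 1) => if l = 0 then D (b l) else E (b l)) := by
    simp_rw [Finset.smul_sum]
    rw [Finset.sum_comm, Finset.sum_congr rfl fun j _ => sum_insert_eq r k E D a j,
      Finset.sum_const, Finset.card_univ, Fintype.card_fin, ← Nat.cast_smul_eq_nsmul ℝ,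
      Finset.smul_sum]
  have hfac : (((k + 1).factorial : ℝ))⁻¹ * ((k + 1 : ℕ) : ℝ) = (k.factorial : ℝ)⁻¹ := by
    rw [Nat.factorial_succ]
    push_cast
    field_simp
  rw [hL, smul_smul, hfac,
    ← (Fin.consEquiv fun _ : Fin (k + 1) => Fin (r + (k + 1))).sum_comp, Fintype.sum_prod_type,
    Finset.smul_sum]
  refine Finset.sum_congr rfl fun c _ => ?_
  rw [mul_smul_comm, Finset.mul_sum]
  congr 1
  refine Finset.sum_congr rfl fun b _ => ?_
  have hx : (fun l : Fin (k + 1) => if l = 0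
        then D ((Fin.cons c b : Fin (k + 1) → Fin (r + (k + 1))) l)
        else E ((Fin.cons c b : Fin (k + 1) → Fin (r + (k + 1))) l)) =
      (Fin.cons (D c) fun l => E (b l) : Fin (k + 1) → V) := by
    funext l
    refine Fin.cases ?_ (fun l => ?_) l <;> simp
  rw [mul_smul_comm, ← wedgeOfFn_cons, ← append_cons_eq, ← hx]
  rfl
end
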